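/- arXiv:1002.1383 — 2 statements merged into one kernel-verified Lean document; each statement's English description precedes it below -/
import Mathlib

section
/- For all natural numbers n and k with n ≥ k, the lcm-binomial number [n, k] divides the binomial coefficient C(n, k) = n! / (k! (n−k)!). -/
/-- `rangeLcm a b` is `lcm(a, a+1, …, b)`, with the convention that the
lcm of an empty range equals `1`. -/
def rangeLcm (a b : ℕ) : ℕ := (Finset.Icc a b).lcm id

/-- The lcm-binomial number `[n, k] = lcm(n, n-1, …, n-k+1) / lcm(1, 2, …, k)`. -/
def lcmBinom (n k : ℕ) : ℕ := rangeLcm (n - k + 1) n / rangeLcm 1 k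

/-! The entries `1 / (k * C(n, k))` of Leibniz's harmonic triangle satisfy
`1 / ((k+1) * C(n+1, k+1)) = 1 / (k * C(n, k)) - 1 / (k * C(n+1, k))`. Starting from the edge
entries `1 / n`, this shows that `k * C(n, k)` divides `lcm(n-k+1, …, n)` for `1 ≤ k ≤ n`. Each
`n - j` with `j < k` divides `((j+1) * C(k, j+1)) * C(n, k)`, whose first factor lies in row `k` of
the same triangle and so divides `lcm(1, …, k)`. Hence `lcm(n-k+1, …, n)` divides
`lcm(1, …, k) * C(n, k)`. -/

section RangeLcm

variable {a b c d i m : ℕ}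

theorem dvd_rangeLcm (ha : a ≤ i) (hb : i ≤ b) : i ∣ rangeLcm a b :=
  Finset.dvd_lcm (f := id) (Finset.mem_Icc.2 ⟨ha, hb⟩)

theorem rangeLcm_dvd (h : ∀ i, a ≤ i → i ≤ b → i ∣ m) : rangeLcm a b ∣ m :=
  Finset.lcm_dvd fun i hi => h i (Finset.mem_Icc.1 hi).1 (Finset.mem_Icc.1 hi).2

theorem rangeLcm_dvd_rangeLcm (hca : c ≤ a) (hbd : b ≤ d) : rangeLcm a b ∣ rangeLcm c d :=
  Finset.lcm_mono (Finset.Icc_subset_Icc hca hbd)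

theorem rangeLcm_pos (ha : 0 < a) : 0 < rangeLcm a b :=
  Nat.pos_of_ne_zero <| Finset.lcm_ne_zero_iff.2 fun _ hi =>
    (ha.trans_le (Finset.mem_Icc.1 hi).1).ne'

end RangeLcm

theorem add_two_mul_choose_dvd {n k m : ℕ} (h : (k + 1) * n.choose (k + 1) ∣ m)
    (h' : (k + 1) * (n + 1).choose (k + 1) ∣ m) :
    (k + 2) * (n + 1).choose (k + 2) ∣ m := by
  obtain ⟨u, hu⟩ := h
  obtain ⟨v, hv⟩ := h'
  have absorb : (k + 2) * (n + 1).choose (k + 2) = (n + 1) * n.choose (k + 1) := by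
    rw [Nat.add_one_mul_choose_eq, mul_comm]
  have pascal : (n + 1) * n.choose (k + 1) + (k + 1) * (n + 1).choose (k + 1) =
      (n + 1) * (n + 1).choose (k + 1) := by
    rw [mul_comm (k + 1), ← Nat.add_one_mul_choose_eq, ← mul_add, add_comm (n.choose _),
      ← Nat.choose_succ_succ']
  zify at hu hv absorb pascal ⊢
  -- Multiplied by `m`, the recurrence of the harmonic triangle gives the cofactor `u - v`.
  refine ⟨u - v, mul_left_cancel₀ (by positivity : (k + 1 : ℤ) ≠ 0) ?_⟩
  calc (k + 1 : ℤ) * m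
      = (n + 1) * m - (n + 1 - (k + 1)) * m := by ring
    _ = (n + 1) * ((k + 1) * n.choose (k + 1) * u)
          - (n + 1 - (k + 1)) * ((k + 1) * (n + 1).choose (k + 1) * v) := by rw [← hu, ← hv]
    _ = (k + 1) * ((n + 1) * n.choose (k + 1) * (u - v)) := by
      linear_combination (k + 1) * v * pascal
    _ = (k + 1) * ((k + 2) * (n + 1).choose (k + 2) * (u - v)) := by rw [absorb]

-- If `n ≤ k`, truncation makes the range start at `0`, so both sides are `0`.
theorem add_one_mul_choose_dvd_rangeLcm (n k : ℕ) :
    (k + 1) * n.choose (k + 1) ∣ rangeLcm (n - k) n := by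
  induction k generalizing n with
  | zero => simpa using dvd_rangeLcm le_rfl le_rfl
  | succ k ih =>
    cases n with
    | zero => simpa using zero_dvd_iff.1 (dvd_rangeLcm (le_refl 0) le_rfl)
    | succ n =>
      exact add_two_mul_choose_dvd
        ((ih n).trans (rangeLcm_dvd_rangeLcm (by lia) (by lia)))
        ((ih (n + 1)).trans (rangeLcm_dvd_rangeLcm (by lia) le_rfl))

theorem rangeLcm_one_dvd_rangeLcm {n k : ℕ} (h : k ≤ n) :
    rangeLcm 1 k ∣ rangeLcm (n - k + 1) n := by
  refine rangeLcm_dvd fun i hi hik => ?_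
  obtain ⟨j, rfl⟩ := Nat.exists_eq_add_of_le' hi
  calc j + 1 ∣ (j + 1) * n.choose (j + 1) := dvd_mul_right _ _
    _ ∣ rangeLcm (n - j) n := add_one_mul_choose_dvd_rangeLcm n j
    _ ∣ rangeLcm (n - k + 1) n := rangeLcm_dvd_rangeLcm (by lia) le_rfl

theorem sub_dvd_add_one_mul_choose_mul_choose (n : ℕ) {k j : ℕ} (hj : j < k) :
    n - j ∣ (j + 1) * k.choose (j + 1) * n.choose k := by
  refine ⟨n.choose j * (n - (j + 1)).choose (k - (j + 1)), ?_⟩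
  calc (j + 1) * k.choose (j + 1) * n.choose k
      = (j + 1) * (n.choose k * k.choose (j + 1)) := by ring
    _ = n.choose (j + 1) * (j + 1) * (n - (j + 1)).choose (k - (j + 1)) := by
      rw [Nat.choose_mul hj]; ring
    _ = (n - j) * (n.choose j * (n - (j + 1)).choose (k - (j + 1))) := by
      rw [Nat.choose_succ_right_eq]; ring

theorem rangeLcm_dvd_rangeLcm_one_mul_choose (n k : ℕ) :
    rangeLcm (n - k + 1) n ∣ rangeLcm 1 k * n.choose k := by
  refine rangeLcm_dvd fun i hi hin => ?_
  obtain ⟨j, rfl, hjk⟩ : ∃ j, i = n - j ∧ j < k := ⟨n - i, by lia, by lia⟩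
  calc n - j ∣ (j + 1) * k.choose (j + 1) * n.choose k :=
        sub_dvd_add_one_mul_choose_mul_choose n hjk
    _ ∣ rangeLcm (k - j) k * n.choose k :=
        mul_dvd_mul_right (add_one_mul_choose_dvd_rangeLcm k j) _
    _ ∣ rangeLcm 1 k * n.choose k :=
        mul_dvd_mul_right (rangeLcm_dvd_rangeLcm (by lia) le_rfl) _

/-- For all natural numbers `n ≥ k`, the lcm-binomial number `[n, k]`
divides the binomial coefficient `C(n, k)`. -/
theorem lcmBinom_dvd_choose (n k : ℕ) (h : k ≤ n) :
    lcmBinom n k ∣ n.choose k :=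
  (Nat.div_dvd_iff_dvd_mul (rangeLcm_one_dvd_rangeLcm h) (rangeLcm_pos one_pos)).2
    (rangeLcm_dvd_rangeLcm_one_mul_choose n k)
end

section
/- For all natural numbers n ≥ k ≥ 0 and every prime p, the p-adic valuation of the binomial coefficient C(n, k) is at least the p-adic valuation of the lcm-binomial number [n, k]; that is, v_p(C(n, k)) ≥ v_p([n, k]). -/
/-!
Write the binomial coefficient as `C(n + k, k)`. The `p`-adic valuation of `lcm(1, …, k)` is
`⌊log_p k⌋`, so it suffices that `v_p(m) - ⌊log_p k⌋ ≤ v_p(C(n + k, k))` whenever `n < m ≤ n + k`.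
By Kummer's theorem the right-hand side counts the carries when `k` and `n` are added in base `p`.
For `⌊log_p k⌋ < e ≤ v_p(m)` we have `k < p ^ e`, so the sum can reach the multiple `m` of `p ^ e`
above `n` only through a carry at `e`; this accounts for `v_p(m) - ⌊log_p k⌋` carries.
-/

theorem factorization_rangeLcm_one {p : ℕ} (hp : p.Prime) (k : ℕ) :
    (rangeLcm 1 k).factorization p = Nat.log p k :=
  Nat.factorization_lcmUpto k hp

theorem dvd_rangeLcm_s19 {a b m : ℕ} (ham : a ≤ m) (hmb : m ≤ b) : m ∣ rangeLcm a b :=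
  Finset.dvd_lcm (f := id) (Finset.mem_Icc.2 ⟨ham, hmb⟩)

theorem rangeLcm_one_dvd_rangeLcm_add (n k : ℕ) :
    rangeLcm 1 k ∣ rangeLcm (n + 1) (n + k) := by
  refine Finset.lcm_dvd fun i hi ↦ ?_
  obtain ⟨hi_pos, hik⟩ := Finset.mem_Icc.1 hi
  have hlt : n < i * (n / i + 1) := Nat.lt_mul_div_succ n hi_pos
  have hle : i * (n / i + 1) ≤ n + k :=
    (mul_add_one i _).trans_le (add_le_add (Nat.mul_div_le n i) hik)
  exact (dvd_mul_right i _).trans (dvd_rangeLcm_s19 hlt hle)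

theorem factorization_rangeLcm_le_iff {a b c p : ℕ} (ha : a ≠ 0) :
    (rangeLcm a b).factorization p ≤ c ↔ ∀ m ∈ Finset.Icc a b, m.factorization p ≤ c := by
  have hne : ∀ m ∈ Finset.Icc a b, id m ≠ 0 := fun m hm ↦ by
    have := (Finset.mem_Icc.1 hm).1
    simp only [id]
    omega
  rw [rangeLcm, Finset.factorization_lcm hne, Finset.sup_le_iff]
  rfl

theorem le_add_mod_of_dvd {d k m n : ℕ} (hdm : d ∣ m) (hnm : n < m) (hmk : m ≤ k + n) :
    d ≤ k + n % d := by
  have hnext : n / d + 1 ≤ m / d := Nat.div_lt_div_of_lt_of_dvd hdm hnm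
  have : d * (n / d) + d ≤ d * (n / d) + (k + n % d) :=
    calc d * (n / d) + d = d * (n / d + 1) := (mul_add_one d _).symm
      _ ≤ d * (m / d) := Nat.mul_le_mul_left d hnext
      _ = m := Nat.mul_div_cancel' hdm
      _ ≤ k + n := hmk
      _ = d * (n / d) + (k + n % d) := by rw [add_left_comm, Nat.div_add_mod]
  exact Nat.le_of_add_le_add_left this

theorem factorization_le_factorization_choose_add_log {p k m n : ℕ} (hp : p.Prime)
    (hnm : n < m) (hmk : m ≤ n + k) :
    m.factorization p ≤ ((n + k).choose k).factorization p + Nat.log p k := by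
  have hcarry : Finset.Ioc (Nat.log p k) (m.factorization p) ⊆
      {e ∈ Finset.Ico 1 (Nat.log p (n + k) + 1) | p ^ e ≤ k % p ^ e + n % p ^ e} := by
    intro e he
    obtain ⟨hlog, hem⟩ := Finset.mem_Ioc.1 he
    have hdvd : p ^ e ∣ m := (hp.pow_dvd_iff_le_factorization (by omega)).2 hem
    have hk : k % p ^ e = k := Nat.mod_eq_of_lt (Nat.lt_pow_of_log_lt hp.one_lt hlog)
    have he_le : e ≤ Nat.log p (n + k) :=
      Nat.le_log_of_pow_le hp.one_lt ((Nat.le_of_dvd (by omega) hdvd).trans hmk)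
    rw [Finset.mem_filter, Finset.mem_Ico, hk]
    exact ⟨by omega, le_add_mod_of_dvd hdvd hnm (by omega)⟩
  rw [← tsub_le_iff_right, ← Nat.card_Ioc, Nat.factorization_choose' hp (Nat.lt_succ_self _)]
  exact Finset.card_le_card hcarry

/-- For `n ≥ k` and every prime `p`, `v_p(C(n, k)) ≥ v_p([n, k])`. -/
theorem factorization_lcmBinom_le_choose (n k p : ℕ) (h : k ≤ n) (hp : p.Prime) :
    (lcmBinom n k).factorization p ≤ (n.choose k).factorization p := by
  obtain ⟨n, rfl⟩ := Nat.exists_eq_add_of_le' h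
  rw [lcmBinom, Nat.add_sub_cancel, Nat.factorization_div (rangeLcm_one_dvd_rangeLcm_add n k),
    Finsupp.tsub_apply, factorization_rangeLcm_one hp, tsub_le_iff_right,
    factorization_rangeLcm_le_iff n.succ_ne_zero]
  intro m hm
  obtain ⟨hnm, hmk⟩ := Finset.mem_Icc.1 hm
  exact factorization_le_factorization_choose_add_log hp hnm hmk
end
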